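/- Let d be a positive integer, let m_1,…,m_d and u_1,…,u_{d−1} be non-negative integers, and set s := (m_1+2, {1}_{u_1}, …, m_{d−1}+2, {1}_{u_{d−1}}, m_d+2), a tuple of length ‖s‖ with weight |s|. Let a ∈ [−1, 1/3] and p ∈ [1/2, 3/2] with p ≠ 1 and |a| ≤ min(1, 2/p − 1). Then Li*_{{1}_{|s|}}( ⊔_{i=1}^{d−1}{1−p, {1}_{m_i}, 1/(1−p), {1}_{u_i}}, 1−p, {1}_{m_d}, 1 + ap/(1−p) ) = Li*_s({1}_{‖s‖−1}, a) − Li*_s({1}_{‖s‖−1}, 1 − 1/p). -/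

import Mathlib

/-- One-dimensional polylogarithm `Li_s(x) = ∑_{n≥1} x^n/n^s`. -/
noncomputable def Li (s : ℕ) (x : ℝ) : ℝ := ∑' n : ℕ, x ^ (n + 1) / (n + 1 : ℝ) ^ s

/-- Multiple polylogarithm
`Li*_{s₁,…,s_d}(x₁,…,x_d) = ∑_{n₁ ≥ ⋯ ≥ n_d ≥ 1} ∏ᵢ xᵢ^{nᵢ}/nᵢ^{sᵢ}`. -/
noncomputable def LiStar (s : List ℕ) (x : List ℝ) : ℝ :=
  ∑' m : {m : Fin s.length → ℕ // (∀ i j : Fin s.length, i ≤ j → m j ≤ m i) ∧ ∀ i, 1 ≤ m i},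
    ∏ i : Fin s.length, x.getD (i : ℕ) 0 ^ m.1 i / (m.1 i : ℝ) ^ s.get i

/-- The exponent tuple `s = (m₁+2, {1}_{u₁}, …, m_d+2, {1}_{u_d}, m_{d+1}+2)`
(here `d+1` plays the role of the paper's `d ≥ 1`). -/
def sTup (d : ℕ) (m : Fin (d + 1) → ℕ) (u : Fin d → ℕ) : List ℕ :=
  (List.ofFn fun i : Fin d => (m i.castSucc + 2) :: List.replicate (u i) 1).flatten ++
    [m (Fin.last d) + 2]

/-- The argument prefix `⊔_{i=1}^{d}{1−p, {1}_{mᵢ}, 1/(1−p), {1}_{uᵢ}}`. -/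
noncomputable def xPre (d : ℕ) (m : Fin (d + 1) → ℕ) (u : Fin d → ℕ) (p : ℝ) : List ℝ :=
  (List.ofFn fun i : Fin d =>
    (1 - p) :: (List.replicate (m i.castSucc) (1 : ℝ) ++
      (1 / (1 - p)) :: List.replicate (u i) (1 : ℝ))).flatten

/-!
Expanding each `1 / (1 - r * u)` geometrically shows that both kinds of multiple polylogarithm in
the statement are values at `t = 1` of iterated integrals over `[0, t]` of the forms
`du / (u * (1 - r * u))`, applied to `-log (1 - e * u)`. On the right all `r` are `0` or `1`; on the
left they are `1 - p` and `1`. The substitution `u = z / (p + (1 - p) * z)` fixes `0` and `1`, turns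
the form with parameter `1 - p + p * r` into the form with parameter `r`, and turns
`-log (1 - (1 - p + p * a) * u)` into `-log (1 - a * z) + log (1 - (1 - 1 / p) * z)`. Hence the
iterated integrals agree for `z < 1`, and Abel's theorem gives the identity at `z = 1`.
-/

open Finset Filter Topology

section GeometricAverage

variable {r : ℝ} {C : ℕ → ℝ}

lemma sum_range_succ_eq_sum_Icc_one {M : Type*} [AddCommMonoid M] {f : ℕ → M} (hf : f 0 = 0)
    (n : ℕ) :
    ∑ k ∈ range (n + 1), f k = ∑ k ∈ Icc 1 n, f k := by
  rw [range_eq_Ico, sum_eq_sum_Ico_succ_bot n.succ_pos, hf, zero_add]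
  rfl

/-- Action on Taylor coefficients of the iterated-integral step
`C(t) ↦ ∫₀ᵗ C(u) / (u * (1 - r * u)) du`; the value at `n = 0` is `0` since `x / 0 = 0`. -/
noncomputable def geomAvg (r : ℝ) (C : ℕ → ℝ) (n : ℕ) : ℝ :=
  (∑ k ∈ range (n + 1), C k * r ^ (n - k)) / n

@[simp]
lemma geomAvg_apply_zero : geomAvg r C 0 = 0 := by
  simp [geomAvg]

lemma geomAvg_zero_left (C : ℕ → ℝ) (n : ℕ) : geomAvg 0 C n = C n / n := by
  rw [geomAvg, sum_range_succ, sum_eq_zero fun k hk => ?_]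
  · simp
  · rw [zero_pow (Nat.sub_ne_zero_of_lt (mem_range.1 hk)), mul_zero]

lemma geomAvg_eq_mul_sum (hr : r ≠ 0) (hC₀ : C 0 = 0) (n : ℕ) :
    geomAvg r C n = r ^ n / n * ∑ k ∈ Icc 1 n, (1 / r) ^ k * C k := by
  rw [← sum_range_succ_eq_sum_Icc_one (by rw [hC₀, mul_zero]), geomAvg, mul_sum, sum_div]
  refine sum_congr rfl fun k hk => ?_
  rw [pow_sub₀ _ hr (mem_range_succ_iff.1 hk), one_div, inv_pow]
  ring

lemma abs_geomAvg_le (hr : |r| ≤ 1) (C : ℕ → ℝ) (n : ℕ) :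
    |geomAvg r C n| ≤ (∑ k ∈ range (n + 1), |C k|) / n := by
  rw [geomAvg, abs_div, Nat.abs_cast]
  gcongr
  refine (abs_sum_le_sum_abs _ _).trans (sum_le_sum fun k _ => ?_)
  rw [abs_mul, abs_pow]
  exact mul_le_of_le_one_right (abs_nonneg _) (pow_le_one₀ (abs_nonneg _) hr)

lemma abs_geomAvg_le_of_abs_le {B : ℝ} (hr : |r| ≤ 1) (hC₀ : C 0 = 0) (hC : ∀ n, |C n| ≤ B)
    (n : ℕ) : |geomAvg r C n| ≤ B := by
  have hB : 0 ≤ B := (abs_nonneg _).trans (hC 0)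
  refine (abs_geomAvg_le hr C n).trans (div_le_of_le_mul₀ n.cast_nonneg hB ?_)
  rw [sum_range_succ', hC₀, abs_zero, add_zero]
  calc ∑ k ∈ range n, |C (k + 1)| ≤ ∑ _k ∈ range n, B := sum_le_sum fun k _ => hC (k + 1)
    _ = B * n := by rw [sum_const, card_range, nsmul_eq_mul, mul_comm]

lemma div_natCast_le_two_mul_div_succ {S : ℝ} (hS : 0 ≤ S) (n : ℕ) : S / n ≤ 2 * (S / (n + 1)) := by
  rcases n.eq_zero_or_pos with rfl | hn
  · simpa using hS
  · have hn1 : (1 : ℝ) ≤ n := by exact_mod_cast hn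
    rw [← mul_div_assoc, div_le_div_iff₀ (by positivity) (by positivity)]
    nlinarith

lemma summable_geomAvg (hr : |r| < 1) (hC : Summable fun n => |C n| / (n + 1)) :
    Summable (geomAvg r C) := by
  have hconv : Summable fun n =>
      ‖∑ k ∈ range (n + 1), |C k| / (k + 1) * |r| ^ (n - k)‖ :=
    summable_norm_sum_mul_range_of_summable_norm hC.norm
      (summable_geometric_of_lt_one (abs_nonneg r) hr).norm
  refine Summable.of_norm_bounded (hconv.of_norm.mul_left 2) fun n => ?_
  calc |geomAvg r C n| ≤ (∑ k ∈ range (n + 1), |C k| * |r| ^ (n - k)) / n := by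
        rw [geomAvg, abs_div, Nat.abs_cast]
        gcongr
        exact (abs_sum_le_sum_abs _ _).trans_eq (by simp only [abs_mul, abs_pow])
    _ ≤ 2 * ((∑ k ∈ range (n + 1), |C k| * |r| ^ (n - k)) / (n + 1)) :=
        div_natCast_le_two_mul_div_succ (by positivity) n
    _ ≤ 2 * ∑ k ∈ range (n + 1), |C k| / (k + 1) * |r| ^ (n - k) := by
        rw [sum_div]
        gcongr with k hk
        rw [div_mul_eq_mul_div]
        gcongr
        exact mem_range_succ_iff.1 hk

/-- A Hardy-type inequality; the subtracted term makes the induction close. -/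
lemma sum_partialSum_div_sq_le {c : ℕ → ℝ} (hc : ∀ n, 0 ≤ c n) (N : ℕ) :
    ∑ n ∈ range N, (∑ k ∈ range (n + 1), c k) / (n + 1) ^ 2 ≤
      2 * ∑ n ∈ range N, c n / (n + 1) - 2 * (∑ n ∈ range N, c n) / (N + 1) := by
  induction N with
  | zero => simp
  | succ N ih =>
    rw [sum_range_succ, sum_range_succ _ N, sum_range_succ _ N]
    have hS : 0 ≤ ∑ n ∈ range N, c n := sum_nonneg fun n _ => hc n
    have hcN := hc N
    set S := ∑ n ∈ range N, c n
    have hstep : (S + c N) / (N + 1) ^ 2 ≤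
        2 * (c N / (N + 1)) + 2 * S / (N + 1) - 2 * (S + c N) / (N + 1 + 1) := by
      have hdiff : 2 * (c N / (N + 1)) + 2 * S / (N + 1) - 2 * (S + c N) / (N + 1 + 1) -
          (S + c N) / (N + 1) ^ 2 = (S + c N) * N / ((N + 1) ^ 2 * (N + 1 + 1)) := by
        field_simp
        ring
      rw [← sub_nonneg, hdiff]
      positivity
    push_cast
    linarith

lemma summable_abs_geomAvg_div (hr : |r| ≤ 1) (hC : Summable fun n => |C n| / (n + 1)) :
    Summable fun n => |geomAvg r C n| / (n + 1) := by
  refine summable_of_sum_range_le (c := 2 * (2 * ∑' n, |C n| / (n + 1)))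
    (fun n => by positivity) fun N => ?_
  calc ∑ n ∈ range N, |geomAvg r C n| / (n + 1)
      ≤ ∑ n ∈ range N, 2 * ((∑ k ∈ range (n + 1), |C k|) / (n + 1) ^ 2) := by
        refine sum_le_sum fun n _ => ?_
        rw [sq, ← div_div, ← mul_div_assoc]
        gcongr
        exact (abs_geomAvg_le hr C n).trans
          (div_natCast_le_two_mul_div_succ (sum_nonneg fun _ _ => abs_nonneg _) n)
    _ ≤ 2 * (2 * ∑ n ∈ range N, |C n| / (n + 1)) := by
        rw [← mul_sum]
        gcongr
        refine (sum_partialSum_div_sq_le (fun n => abs_nonneg (C n)) N).trans (sub_le_self _ ?_)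
        positivity
    _ ≤ 2 * (2 * ∑' n, |C n| / (n + 1)) := by
        gcongr
        exact hC.sum_le_tsum _ fun n _ => by positivity

end GeometricAverage

section PowerSeries

variable {C : ℕ → ℝ} {B t : ℝ}

lemma summable_norm_mul_pow (hC : ∀ n, |C n| ≤ B) (ht : |t| < 1) :
    Summable fun n => ‖C n * t ^ n‖ := by
  refine Summable.of_nonneg_of_le (fun n => norm_nonneg _) (fun n => ?_)
    ((summable_geometric_of_lt_one (abs_nonneg t) ht).mul_left B)
  rw [Real.norm_eq_abs, abs_mul, abs_pow]
  gcongr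
  exact hC n

lemma hasDerivAt_tsum_mul_pow (hC : ∀ n, |C n| ≤ B) (ht : |t| < 1) :
    HasDerivAt (fun t => ∑' n, C n * t ^ n) (∑' n, C n * (n * t ^ (n - 1))) t := by
  obtain ⟨ρ, htρ, hρ1⟩ := exists_between ht
  have hρ : 0 < ρ := (abs_nonneg _).trans_lt htρ
  have hbound : Summable fun n : ℕ => B * (n * ρ ^ (n - 1)) := by
    refine Summable.mul_left B <| ((summable_pow_mul_geometric_of_norm_lt_one 1
      (by rwa [Real.norm_of_nonneg hρ.le])).mul_left ρ⁻¹).congr fun n => ?_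
    cases n with
    | zero => simp
    | succ n => rw [Nat.add_sub_cancel, pow_succ ρ]; field_simp
  refine hasDerivAt_tsum_of_isPreconnected (t := Metric.ball 0 ρ) (y₀ := 0) hbound
    Metric.isOpen_ball (convex_ball 0 ρ).isPreconnected
    (fun n y _ => (hasDerivAt_pow n y).const_mul (C n)) (fun n y hy => ?_)
    (Metric.mem_ball_self hρ) (summable_norm_mul_pow hC (by simp)).of_norm (by simpa using htρ)
  have hyρ : |y| ≤ ρ := (mem_ball_zero_iff.1 hy).le
  have hB : 0 ≤ B := (abs_nonneg _).trans (hC 0)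
  rw [Real.norm_eq_abs, abs_mul, abs_mul, abs_pow, Nat.abs_cast]
  gcongr
  exact hC n

/-- Multiplying by `t` turns the derivative into a Cauchy product with a geometric series. -/
lemma hasDerivAt_tsum_geomAvg_mul_pow {r : ℝ} (hr : |r| ≤ 1) (hC₀ : C 0 = 0)
    (hC : ∀ n, |C n| ≤ B) (ht₀ : t ≠ 0) (ht : |t| < 1) :
    HasDerivAt (fun t => ∑' n, geomAvg r C n * t ^ n)
      ((∑' n, C n * t ^ n) / (t * (1 - r * t))) t := by
  have hrt : ‖r * t‖ < 1 := by
    rw [Real.norm_eq_abs, abs_mul]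
    exact mul_lt_one_of_nonneg_of_lt_one_right hr (abs_nonneg t) ht
  have hterm (n : ℕ) : geomAvg r C n * (n * t ^ (n - 1)) * t =
      ∑ k ∈ range (n + 1), C k * t ^ k * (r * t) ^ (n - k) := by
    cases n with
    | zero => simp [hC₀]
    | succ n =>
      rw [geomAvg, Nat.add_sub_cancel, mul_assoc, mul_assoc, ← pow_succ, ← mul_assoc,
        div_mul_cancel₀ _ (Nat.cast_ne_zero.2 n.succ_ne_zero), sum_mul]
      refine sum_congr rfl fun k hk => ?_
      rw [mul_pow, ← pow_mul_pow_sub t (mem_range_succ_iff.1 hk)]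
      ring
  have hcauchy : (∑' n, geomAvg r C n * (n * t ^ (n - 1))) * t =
      (∑' n, C n * t ^ n) * (1 - r * t)⁻¹ := by
    rw [← tsum_mul_right, ← tsum_geometric_of_norm_lt_one hrt, tsum_congr hterm]
    exact (tsum_mul_tsum_eq_tsum_sum_range_of_summable_norm (summable_norm_mul_pow hC ht)
      (summable_geometric_of_norm_lt_one hrt).norm).symm
  rw [mul_comm t, ← div_div, div_eq_mul_inv _ (1 - r * t), ← hcauchy, mul_div_cancel_right₀ _ ht₀]
  exact hasDerivAt_tsum_mul_pow (abs_geomAvg_le_of_abs_le hr hC₀ hC) ht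

end PowerSeries

section Hyperlogarithm

variable {e r t : ℝ} {l : List ℝ}

/-- Taylor coefficients at `0` of the iterated integral `hyperlog e l`; in the base case the
constant coefficient is `0` since `x / 0 = 0`. -/
noncomputable def hyperlogCoeff (e : ℝ) : List ℝ → ℕ → ℝ
  | [] => fun n => e ^ n / n
  | r :: l => geomAvg r (hyperlogCoeff e l)

/-- The hyperlogarithm: the iterated integral over `[0, t]` of the forms `du / (u * (1 - r * u))`
for `r` in `l`, outermost first, applied to `-log (1 - e * u)`. -/
noncomputable def hyperlog (e : ℝ) (l : List ℝ) (t : ℝ) : ℝ :=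
  ∑' n, hyperlogCoeff e l n * t ^ n

@[simp]
lemma hyperlogCoeff_apply_zero (e : ℝ) (l : List ℝ) : hyperlogCoeff e l 0 = 0 := by
  cases l <;> simp [hyperlogCoeff]

@[simp]
lemma hyperlog_apply_zero (e : ℝ) (l : List ℝ) : hyperlog e l 0 = 0 := by
  refine (tsum_congr fun n => ?_).trans tsum_zero
  cases n <;> simp

lemma abs_hyperlogCoeff_le_one (he : |e| ≤ 1) (hl : ∀ r ∈ l, |r| ≤ 1) (n : ℕ) :
    |hyperlogCoeff e l n| ≤ 1 := by
  induction l generalizing n with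
  | nil =>
    rcases n.eq_zero_or_pos with rfl | hn
    · simp
    · rw [hyperlogCoeff, abs_div, abs_pow, Nat.abs_cast]
      exact div_le_one_of_le₀ ((pow_le_one₀ (abs_nonneg e) he).trans (Nat.one_le_cast.2 hn))
        n.cast_nonneg
  | cons r l ih =>
    rw [List.forall_mem_cons] at hl
    exact abs_geomAvg_le_of_abs_le hl.1 (hyperlogCoeff_apply_zero e l) (ih hl.2) n

lemma summable_abs_hyperlogCoeff_div (he : |e| ≤ 1) (hl : ∀ r ∈ l, |r| ≤ 1) :
    Summable fun n => |hyperlogCoeff e l n| / (n + 1) := by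
  induction l with
  | nil =>
    refine Summable.of_nonneg_of_le (fun n => by positivity) (fun n => ?_)
      (Real.summable_one_div_nat_pow.2 one_lt_two)
    rcases n.eq_zero_or_pos with rfl | hn
    · simp
    · rw [hyperlogCoeff, abs_div, abs_pow, Nat.abs_cast, div_div, sq]
      gcongr
      · exact pow_le_one₀ (abs_nonneg e) he
      · linarith
  | cons r l ih =>
    rw [List.forall_mem_cons] at hl
    exact summable_abs_geomAvg_div hl.1 (ih hl.2)

lemma summable_hyperlogCoeff_cons (he : |e| ≤ 1) (hr : |r| < 1) (hl : ∀ r ∈ l, |r| ≤ 1) :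
    Summable (hyperlogCoeff e (r :: l)) :=
  summable_geomAvg hr (summable_abs_hyperlogCoeff_div he hl)

lemma hyperlog_nil (he : |e| ≤ 1) (ht : |t| < 1) : hyperlog e [] t = -Real.log (1 - e * t) := by
  have het : |e * t| < 1 := by
    rw [abs_mul]
    exact mul_lt_one_of_nonneg_of_lt_one_right he (abs_nonneg t) ht
  have hsum : Summable fun n => hyperlogCoeff e [] n * t ^ n :=
    (summable_norm_mul_pow (abs_hyperlogCoeff_le_one he (by simp)) ht).of_norm
  rw [hyperlog, hsum.tsum_eq_zero_add, hyperlogCoeff_apply_zero, zero_mul, zero_add,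
    ← (Real.hasSum_pow_div_log_of_abs_lt_one het).tsum_eq]
  refine tsum_congr fun n => ?_
  rw [hyperlogCoeff, mul_pow]
  push_cast
  ring

lemma continuousAt_hyperlog (he : |e| ≤ 1) (hl : ∀ r ∈ l, |r| ≤ 1) (ht : |t| < 1) :
    ContinuousAt (hyperlog e l) t :=
  (hasDerivAt_tsum_mul_pow (abs_hyperlogCoeff_le_one he hl) ht).continuousAt

lemma hasDerivAt_hyperlog_cons (he : |e| ≤ 1) (hr : |r| ≤ 1) (hl : ∀ r ∈ l, |r| ≤ 1) (ht₀ : t ≠ 0)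
    (ht : |t| < 1) : HasDerivAt (hyperlog e (r :: l)) (hyperlog e l t / (t * (1 - r * t))) t :=
  hasDerivAt_tsum_geomAvg_mul_pow hr (hyperlogCoeff_apply_zero e l)
    (abs_hyperlogCoeff_le_one he hl) ht₀ ht

lemma tendsto_hyperlog_cons_one (he : |e| ≤ 1) (hr : |r| < 1) (hl : ∀ r ∈ l, |r| ≤ 1) :
    Tendsto (hyperlog e (r :: l)) (𝓝[<] 1) (𝓝 (∑' n, hyperlogCoeff e (r :: l) n)) :=
  Real.tendsto_tsum_powerSeries_nhdsWithin_lt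
    (summable_hyperlogCoeff_cons he hr hl).hasSum.tendsto_sum_nat

end Hyperlogarithm

section MoebiusSubstitution

variable {a p r z : ℝ} {l : List ℝ}

/-- The Möbius map fixing `0` and `1` and sending `∞` to `1 / (1 - p)`. -/
noncomputable def moebius (p z : ℝ) : ℝ := z / (p + (1 - p) * z)

/-- The action of `moebius p` on the parameters of hyperlogarithms: the singularity `1 / r` of
`du / (u * (1 - r * u))` is mapped to `1 / moebiusRatio p r`. -/
def moebiusRatio (p r : ℝ) : ℝ := 1 - p + p * r

lemma moebius_denom_pos (hp : 0 < p) (hz₀ : 0 ≤ z) (hz₁ : z < 1) : 0 < p + (1 - p) * z := by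
  nlinarith

lemma moebius_nonneg (hp : 0 < p) (hz₀ : 0 ≤ z) (hz₁ : z < 1) : 0 ≤ moebius p z :=
  div_nonneg hz₀ (moebius_denom_pos hp hz₀ hz₁).le

lemma moebius_lt_one (hp : 0 < p) (hz₀ : 0 ≤ z) (hz₁ : z < 1) : moebius p z < 1 := by
  rw [moebius, div_lt_one (moebius_denom_pos hp hz₀ hz₁)]
  nlinarith

lemma abs_moebius_lt_one (hp : 0 < p) (hz₀ : 0 ≤ z) (hz₁ : z < 1) : |moebius p z| < 1 := by
  rw [abs_of_nonneg (moebius_nonneg hp hz₀ hz₁)]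
  exact moebius_lt_one hp hz₀ hz₁

lemma hasDerivAt_moebius (hz : p + (1 - p) * z ≠ 0) :
    HasDerivAt (moebius p) (p / (p + (1 - p) * z) ^ 2) z := by
  refine ((hasDerivAt_id z).div (((hasDerivAt_id z).const_mul (1 - p)).const_add p) hz).congr_deriv
    ?_
  simp only [id]
  ring

lemma tendsto_moebius_one (hp : 0 < p) : Tendsto (moebius p) (𝓝[<] 1) (𝓝[<] 1) := by
  refine tendsto_nhdsWithin_iff.2 ⟨?_, ?_⟩
  · have hcont : ContinuousAt (moebius p) 1 := (hasDerivAt_moebius (by simp)).continuousAt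
    simpa [ContinuousAt, moebius] using hcont.tendsto.mono_left nhdsWithin_le_nhds
  · filter_upwards [Ioo_mem_nhdsLT one_pos] with z hz
    exact moebius_lt_one hp hz.1.le hz.2

lemma one_sub_moebiusRatio_mul_moebius (hz : p + (1 - p) * z ≠ 0) (r : ℝ) :
    1 - moebiusRatio p r * moebius p z = p * (1 - r * z) / (p + (1 - p) * z) := by
  rw [moebius, moebiusRatio, eq_div_iff hz, sub_mul, mul_assoc, div_mul_cancel₀ _ hz]
  ring

/-- The form `du / (u * (1 - moebiusRatio p r * u))` pulls back to `dz / (z * (1 - r * z))`. -/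
lemma hasDerivAt_hyperlog_cons_moebius {e : ℝ} (hp : 0 < p) (he : |e| ≤ 1)
    (hr : |moebiusRatio p r| ≤ 1) (hl : ∀ r ∈ l, |r| ≤ 1) (hz₀ : 0 < z) (hz₁ : z < 1) :
    HasDerivAt (fun z => hyperlog e (moebiusRatio p r :: l) (moebius p z))
      (hyperlog e l (moebius p z) / (z * (1 - r * z))) z := by
  have hD := moebius_denom_pos hp hz₀.le hz₁
  have hτ₀ : moebius p z ≠ 0 := div_ne_zero hz₀.ne' hD.ne'
  refine ((hasDerivAt_hyperlog_cons he hr hl hτ₀ (abs_moebius_lt_one hp hz₀.le hz₁)).comp z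
    (hasDerivAt_moebius hD.ne')).congr_deriv ?_
  have hfactor : moebius p z * (1 - moebiusRatio p r * moebius p z) =
      p / (p + (1 - p) * z) ^ 2 * (z * (1 - r * z)) := by
    rw [one_sub_moebiusRatio_mul_moebius hD.ne', moebius]
    field_simp
  rw [hfactor, div_mul_eq_mul_div, mul_comm, mul_div_mul_left _ _ (by positivity)]

lemma hyperlog_nil_moebius (hp : 0 < p) (ha : |a| ≤ 1) (ha' : |moebiusRatio p a| ≤ 1)
    (hb : |1 - 1 / p| ≤ 1) (hz₀ : 0 ≤ z) (hz₁ : z < 1) :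
    hyperlog (moebiusRatio p a) [] (moebius p z) = hyperlog a [] z - hyperlog (1 - 1 / p) [] z := by
  have hz : |z| < 1 := by rwa [abs_of_nonneg hz₀]
  have hD := moebius_denom_pos hp hz₀ hz₁
  have haz : 0 < 1 - a * z := by nlinarith [abs_le.1 ha]
  have hbz : 1 - (1 - 1 / p) * z = (p + (1 - p) * z) / p := by
    field_simp
    ring
  rw [hyperlog_nil ha' (abs_moebius_lt_one hp hz₀ hz₁), hyperlog_nil ha hz, hyperlog_nil hb hz,
    one_sub_moebiusRatio_mul_moebius hD.ne', hbz, Real.log_div (by positivity) hD.ne',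
    Real.log_div hD.ne' hp.ne', Real.log_mul hp.ne' haz.ne']
  ring

/-- Both sides solve the same first-order equation, because `moebius p` transforms each form
`du / (u * (1 - r * u))` into another one of the same shape. -/
theorem hyperlog_moebius (hp : 0 < p) (ha : |a| ≤ 1) (ha' : |moebiusRatio p a| ≤ 1)
    (hb : |1 - 1 / p| ≤ 1) (hl : ∀ r ∈ l, |r| ≤ 1) (hl' : ∀ r ∈ l.map (moebiusRatio p), |r| ≤ 1)
    (hz₀ : 0 ≤ z) (hz₁ : z < 1) :
    hyperlog (moebiusRatio p a) (l.map (moebiusRatio p)) (moebius p z) =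
      hyperlog a l z - hyperlog (1 - 1 / p) l z := by
  induction l generalizing z with
  | nil => exact hyperlog_nil_moebius hp ha ha' hb hz₀ hz₁
  | cons r l ih =>
    have hl_tail := (List.forall_mem_cons.1 hl).2
    have hl'_tail := (List.forall_mem_cons.1 hl').2
    rcases hz₀.eq_or_lt with rfl | hz₀
    · simp [moebius]
    set H : ℝ → ℝ := fun x =>
      hyperlog (moebiusRatio p a) ((r :: l).map (moebiusRatio p)) (moebius p x) -
        (hyperlog a (r :: l) x - hyperlog (1 - 1 / p) (r :: l) x) with hH
    have hcont : ContinuousOn H (Set.Icc 0 z) := fun x ⟨hx₀, hxz⟩ => by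
      have hx₁ : x < 1 := hxz.trans_lt hz₁
      have hx : |x| < 1 := by rwa [abs_of_nonneg hx₀]
      have hτ := (hasDerivAt_moebius (moebius_denom_pos hp hx₀ hx₁).ne').continuousAt
      exact (((continuousAt_hyperlog ha' hl' (abs_moebius_lt_one hp hx₀ hx₁)).comp hτ).sub
        ((continuousAt_hyperlog ha hl hx).sub
          (continuousAt_hyperlog hb hl hx))).continuousWithinAt
    have hderiv : ∀ x ∈ Set.Ioo 0 z, HasDerivAt H 0 x := fun x ⟨hx₀, hxz⟩ => by
      have hx₁ : x < 1 := hxz.trans hz₁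
      have hx : |x| < 1 := by rwa [abs_of_pos hx₀]
      have hleft := hasDerivAt_hyperlog_cons_moebius hp ha' (hl' _ List.mem_cons_self) hl'_tail
        hx₀ hx₁
      rw [ih hl_tail hl'_tail hx₀.le hx₁] at hleft
      have hr := hl r List.mem_cons_self
      exact (hleft.sub ((hasDerivAt_hyperlog_cons ha hr hl_tail hx₀.ne' hx).sub
        (hasDerivAt_hyperlog_cons hb hr hl_tail hx₀.ne' hx))).congr_deriv (by ring)
    have hH₀ : H 0 = 0 := by simp [hH, moebius]
    obtain ⟨y, -, hy⟩ := exists_hasDerivAt_eq_slope H (fun _ => 0) hz₀ hcont hderiv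
    rw [hH₀, sub_zero, sub_zero, eq_comm, div_eq_zero_iff, or_iff_left hz₀.ne'] at hy
    exact sub_eq_zero.1 hy

theorem tsum_hyperlogCoeff_moebius (hp : 0 < p) (ha : |a| ≤ 1) (ha' : |moebiusRatio p a| ≤ 1)
    (hb : |1 - 1 / p| ≤ 1) (hr : |r| < 1) (hr' : |moebiusRatio p r| < 1)
    (hl : ∀ r ∈ l, |r| ≤ 1) (hl' : ∀ r ∈ l.map (moebiusRatio p), |r| ≤ 1) :
    ∑' n, hyperlogCoeff (moebiusRatio p a) ((r :: l).map (moebiusRatio p)) n =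
      ∑' n, hyperlogCoeff a (r :: l) n - ∑' n, hyperlogCoeff (1 - 1 / p) (r :: l) n := by
  refine tendsto_nhds_unique
    ((tendsto_hyperlog_cons_one ha' hr' hl').comp (tendsto_moebius_one hp))
    (((tendsto_hyperlog_cons_one ha hr hl).sub
      (tendsto_hyperlog_cons_one hb hr hl)).congr' ?_)
  filter_upwards [Ioo_mem_nhdsLT one_pos] with z hz
  exact (hyperlog_moebius hp ha ha' hb (List.forall_mem_cons.2 ⟨hr.le, hl⟩)
    (List.forall_mem_cons.2 ⟨hr'.le, hl'⟩) hz.1.le hz.2).symm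

end MoebiusSubstitution

section TruncatedSums

/-- The index set of `LiStar` cut off at `N`: the tuples `N ≥ m₁ ≥ ⋯ ≥ mₖ ≥ 1`. -/
def decreasingTuples (k N : ℕ) : Finset (Fin k → ℕ) :=
  {m ∈ Fintype.piFinset fun _ => Icc 1 N | ∀ i j, i ≤ j → m j ≤ m i}

/-- The finite partial sum of `LiStar s x` over the indices bounded by `N`. -/
noncomputable def truncLiStar (s : List ℕ) (x : List ℝ) (N : ℕ) : ℝ :=
  ∑ m ∈ decreasingTuples s.length N,
    ∏ i : Fin s.length, x.getD (i : ℕ) 0 ^ m i / (m i : ℝ) ^ s.get i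

lemma mem_decreasingTuples {k N : ℕ} {m : Fin k → ℕ} :
    m ∈ decreasingTuples k N ↔
      ((∀ i j, i ≤ j → m j ≤ m i) ∧ ∀ i, 1 ≤ m i) ∧ ∀ i, m i ≤ N := by
  simp only [decreasingTuples, mem_filter, Fintype.mem_piFinset, mem_Icc, forall_and]
  tauto

lemma cons_mem_decreasingTuples {k N n : ℕ} {m : Fin k → ℕ} :
    (Fin.cons n m : Fin (k + 1) → ℕ) ∈ decreasingTuples (k + 1) N ↔
      n ∈ Icc 1 N ∧ m ∈ decreasingTuples k n := by
  simp only [mem_decreasingTuples, Fin.forall_fin_succ, Fin.cons_zero, Fin.cons_succ, mem_Icc,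
    Fin.succ_le_succ_iff, Fin.zero_le, forall_const, le_refl, true_and, Fin.le_zero_iff,
    Fin.succ_ne_zero, false_imp_iff]
  constructor
  · rintro ⟨⟨⟨hmn, hm⟩, hn, hm₁⟩, hnN, -⟩
    exact ⟨⟨hn, hnN⟩, ⟨hm, hm₁⟩, hmn⟩
  · rintro ⟨⟨hn, hnN⟩, ⟨hm, hm₁⟩, hmn⟩
    exact ⟨⟨⟨hmn, hm⟩, hn, hm₁⟩, hnN, fun i => (hmn i).trans hnN⟩

lemma sum_decreasingTuples_succ {M : Type*} [AddCommMonoid M] (k N : ℕ)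
    (F : (Fin (k + 1) → ℕ) → M) :
    ∑ m ∈ decreasingTuples (k + 1) N, F m =
      ∑ n ∈ Icc 1 N, ∑ m ∈ decreasingTuples k n, F (Fin.cons n m) := by
  rw [sum_sigma']
  refine sum_nbij' (fun m => ⟨m 0, Fin.tail m⟩) (fun q => Fin.cons q.1 q.2)
    (fun m hm => ?_) (fun q hq => ?_) (fun m _ => Fin.cons_self_tail m) (fun q _ => rfl)
    (fun m _ => by rw [Fin.cons_self_tail])
  · rw [← Fin.cons_self_tail m, cons_mem_decreasingTuples] at hm
    exact mem_sigma.2 hm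
  · exact cons_mem_decreasingTuples.2 (mem_sigma.1 hq)

@[simp]
lemma truncLiStar_nil (x : List ℝ) (N : ℕ) : truncLiStar [] x N = 1 := by
  simp [truncLiStar, decreasingTuples]

lemma truncLiStar_cons_cons (k : ℕ) (s : List ℕ) (y : ℝ) (x : List ℝ) (N : ℕ) :
    truncLiStar (k :: s) (y :: x) N =
      ∑ n ∈ Icc 1 N, y ^ n / (n : ℝ) ^ k * truncLiStar s x n := by
  simp only [truncLiStar, List.length_cons, sum_decreasingTuples_succ, mul_sum]
  refine sum_congr rfl fun n _ => sum_congr rfl fun m _ => ?_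
  rw [Fin.prod_univ_succ]
  rfl

lemma summable_of_sum_abs_le_of_tendsto {ι : Type*} {f : ι → ℝ} {φ : ℕ → Finset ι} {B : ℝ}
    (hφ : Tendsto φ atTop atTop) (hf : ∀ N, ∑ i ∈ φ N, |f i| ≤ B) : Summable f := by
  refine (summable_of_sum_le (c := B) (fun _ => abs_nonneg _) fun u => ?_).of_abs
  obtain ⟨N, hN⟩ := (hφ.eventually_ge_atTop u).exists
  exact (sum_le_sum_of_subset_of_nonneg hN fun _ _ _ => abs_nonneg _).trans (hf N)

lemma tendsto_truncLiStar {s : List ℕ} {x : List ℝ} {B : ℝ}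
    (hB : ∀ N, truncLiStar s (x.map abs) N ≤ B) :
    Tendsto (truncLiStar s x) atTop (𝓝 (LiStar s x)) := by
  set P : (Fin s.length → ℕ) → Prop := fun m => (∀ i j, i ≤ j → m j ≤ m i) ∧ ∀ i, 1 ≤ m i
  set term : (Fin s.length → ℕ) → ℝ :=
    fun m => ∏ i : Fin s.length, x.getD (i : ℕ) 0 ^ m i / (m i : ℝ) ^ s.get i
  set φ : ℕ → Finset {m // P m} := fun N => (decreasingTuples s.length N).subtype P
  have hφ : Tendsto φ atTop atTop := by
    refine tendsto_atTop_finset_of_monotone (fun N M hNM => subtype_mono ?_) fun m => ?_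
    · intro m hm
      rw [mem_decreasingTuples] at hm ⊢
      exact ⟨hm.1, fun i => (hm.2 i).trans hNM⟩
    · exact ⟨univ.sup m.1, mem_subtype.2 (mem_decreasingTuples.2
        ⟨m.2, fun i => le_sup (f := m.1) (mem_univ i)⟩)⟩
  have hφ_sum (g : (Fin s.length → ℕ) → ℝ) (N : ℕ) :
      ∑ m ∈ φ N, g m = ∑ m ∈ decreasingTuples s.length N, g m :=
    sum_subtype_of_mem g fun m hm => (mem_decreasingTuples.1 hm).1
  have hterm_abs (m : Fin s.length → ℕ) : |term m| =
      ∏ i : Fin s.length, (x.map abs).getD (i : ℕ) 0 ^ m i / (m i : ℝ) ^ s.get i := by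
    rw [abs_prod]
    refine prod_congr rfl fun i _ => ?_
    rw [← abs_zero (α := ℝ), List.getD_map, abs_zero, abs_div, abs_pow, abs_pow, Nat.abs_cast]
  have hsummable : Summable fun m : {m // P m} => term m := by
    refine summable_of_sum_abs_le_of_tendsto (B := B) hφ fun N => ?_
    rw [hφ_sum (fun m => |term m|)]
    simp only [hterm_abs]
    exact hB N
  exact (hsummable.hasSum.comp hφ).congr fun N => hφ_sum term N

/-- Summing over all indices but the largest turns `LiStar` into a single series. -/
lemma LiStar_eq_tsum {s : List ℕ} {x : List ℝ} {C C' : ℕ → ℝ} (hC : Summable C) (hC' : Summable C')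
    (hC₀ : C 0 = 0) (htrunc : ∀ N, truncLiStar s x N = ∑ n ∈ Icc 1 N, C n)
    (htrunc_abs : ∀ N, truncLiStar s (x.map abs) N = ∑ n ∈ Icc 1 N, C' n) :
    LiStar s x = ∑' n, C n := by
  have hlim : Tendsto (truncLiStar s x) atTop (𝓝 (LiStar s x)) :=
    tendsto_truncLiStar fun N => (htrunc_abs N).trans_le <|
      (sum_le_sum fun n _ => le_abs_self (C' n)).trans
        (hC'.abs.sum_le_tsum _ fun n _ => abs_nonneg (C' n))
  refine tendsto_nhds_unique hlim
    ((hC.hasSum.tendsto_sum_nat.comp (tendsto_add_atTop_nat 1)).congr fun N => ?_)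
  rw [htrunc, ← sum_range_succ_eq_sum_Icc_one hC₀]
  rfl

end TruncatedSums

section UnitExponents

variable {e r : ℝ} {l : List ℝ}

/-- The successive quotients `[y₁ / r, y₂ / y₁, y₃ / y₂, …]` of `[y₁, y₂, …]`: the arguments of the
multiple polylogarithm with unit exponents whose ratios are `y₁, y₂, …`. -/
noncomputable def succQuotients : ℝ → List ℝ → List ℝ
  | _, [] => []
  | r, y :: l => y / r :: succQuotients y l

lemma map_abs_succQuotients (r : ℝ) (l : List ℝ) :
    (succQuotients r l).map abs = succQuotients |r| (l.map abs) := by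
  induction l generalizing r with
  | nil => rfl
  | cons y l ih => simp only [succQuotients, List.map_cons, abs_div, ih]

lemma succQuotients_replicate_append {y : ℝ} (hy : y ≠ 0) (r : ℝ) (k : ℕ) (l : List ℝ) :
    succQuotients r (List.replicate (k + 1) y ++ l) =
      y / r :: (List.replicate k 1 ++ succQuotients y l) := by
  induction k generalizing r with
  | zero => rfl
  | succ k ih =>
    rw [List.replicate_succ, List.cons_append, succQuotients, ih, div_self hy, List.replicate_succ,
      List.cons_append]

lemma truncLiStar_succQuotients (hl : ∀ y ∈ l, y ≠ 0) (N : ℕ) :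
    truncLiStar (List.replicate (l.length + 1) 1) (succQuotients r (l ++ [e])) N =
      ∑ n ∈ Icc 1 N, (1 / r) ^ n * hyperlogCoeff e l n := by
  induction l generalizing r N with
  | nil =>
    refine (truncLiStar_cons_cons 1 [] (e / r) [] N).trans (sum_congr rfl fun n _ => ?_)
    rw [truncLiStar_nil, hyperlogCoeff]
    ring
  | cons y l ih =>
    rw [List.forall_mem_cons] at hl
    rw [List.replicate_succ, List.cons_append, succQuotients, truncLiStar_cons_cons,
      List.length_cons]
    refine sum_congr rfl fun n _ => ?_
    rw [ih hl.2, hyperlogCoeff, geomAvg_eq_mul_sum hl.1 (hyperlogCoeff_apply_zero e l)]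
    ring

lemma LiStar_succQuotients (he : |e| ≤ 1) (hr₀ : r ≠ 0) (hr : |r| < 1) (hl₀ : ∀ y ∈ l, y ≠ 0)
    (hl : ∀ y ∈ l, |y| ≤ 1) :
    LiStar (List.replicate ((r :: l).length + 1) 1) (succQuotients 1 (r :: l ++ [e])) =
      ∑' n, hyperlogCoeff e (r :: l) n := by
  refine LiStar_eq_tsum (C' := hyperlogCoeff |e| ((r :: l).map abs))
    (summable_hyperlogCoeff_cons he hr hl)
    (summable_hyperlogCoeff_cons (by rwa [abs_abs]) (by rwa [abs_abs]) (by simpa using hl))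
    (hyperlogCoeff_apply_zero _ _) (fun N => ?_) fun N => ?_
  · rw [truncLiStar_succQuotients (List.forall_mem_cons.2 ⟨hr₀, hl₀⟩)]
    simp only [div_one, one_pow, one_mul]
  · have hmap_ne : ∀ y ∈ (r :: l).map abs, y ≠ 0 := by simpa using ⟨hr₀, hl₀⟩
    rw [map_abs_succQuotients, abs_one, List.map_append, List.map_singleton,
      ← List.length_map (as := r :: l) abs, truncLiStar_succQuotients hmap_ne]
    simp only [div_one, one_pow, one_mul]

end UnitExponents

section ConstantArguments

variable {a : ℝ} {k : ℕ} {s : List ℕ}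

/-- The ratios `({0}_{s₁-1}, 1, {0}_{s₂-1}, 1, …, 1, {0}_{s_d-1})` of the multiple polylogarithm
`LiStar s ({1}_{d-1}, a)`, written as an iterated integral; meaningful for positive `sᵢ` only. -/
def ratioWord : List ℕ → List ℝ
  | [] => []
  | [k] => List.replicate (k - 1) 0
  | k :: j :: s => List.replicate (k - 1) 0 ++ 1 :: ratioWord (j :: s)

lemma ratioWord_cons (k : ℕ) (hs : s ≠ []) :
    ratioWord (k :: s) = List.replicate (k - 1) 0 ++ 1 :: ratioWord s := by
  obtain ⟨j, s, rfl⟩ := List.exists_cons_of_ne_nil hs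
  rfl

lemma ratioWord_replicate_one_append (u : ℕ) (hs : s ≠ []) :
    ratioWord (List.replicate u 1 ++ s) = List.replicate u 1 ++ ratioWord s := by
  induction u with
  | zero => rfl
  | succ u ih =>
    rw [List.replicate_succ, List.cons_append,
      ratioWord_cons 1 (List.append_ne_nil_of_right_ne_nil _ hs), ih]
    rfl

lemma eq_zero_or_one_of_mem_ratioWord : ∀ r ∈ ratioWord s, r = 0 ∨ r = 1 := by
  induction s with
  | nil => simp [ratioWord]
  | cons k s ih =>
    cases s with
    | nil => exact fun r hr => Or.inl (List.eq_of_mem_replicate hr)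
    | cons j s =>
      intro r hr
      rw [ratioWord, List.mem_append, List.mem_cons] at hr
      rcases hr with hr | hr | hr
      · exact Or.inl (List.eq_of_mem_replicate hr)
      · exact Or.inr hr
      · exact ih r hr

lemma abs_le_one_of_mem_ratioWord {r : ℝ} (hr : r ∈ ratioWord s) : |r| ≤ 1 := by
  rcases eq_zero_or_one_of_mem_ratioWord r hr with rfl | rfl <;> simp

lemma ratioWord_add_two_cons (k : ℕ) (s : List ℕ) :
    ratioWord ((k + 2) :: s) = 0 :: ratioWord ((k + 1) :: s) := by
  cases s <;> rfl

lemma length_ratioWord_cons_add_one (hs : ∀ j ∈ k :: s, 0 < j) :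
    (ratioWord (k :: s)).length + 1 = (k :: s).sum := by
  induction s generalizing k with
  | nil =>
    have hk := hs k List.mem_cons_self
    rw [ratioWord, List.length_replicate, List.sum_singleton, Nat.sub_add_cancel hk]
  | cons j s ih =>
    rw [List.forall_mem_cons] at hs
    rw [ratioWord, List.sum_cons, ← ih hs.2, List.length_append, List.length_cons,
      List.length_replicate]
    lia

lemma hyperlogCoeff_replicate_zero_append (a : ℝ) (j : ℕ) (l : List ℝ) (n : ℕ) :
    hyperlogCoeff a (List.replicate j 0 ++ l) n = hyperlogCoeff a l n / n ^ j := by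
  induction j with
  | zero => simp
  | succ j ih =>
    rw [List.replicate_succ, List.cons_append, hyperlogCoeff, geomAvg_zero_left, ih, div_div,
      pow_succ]

lemma truncLiStar_replicate_one_append (hs : ∀ j ∈ k :: s, 0 < j) (N : ℕ) :
    truncLiStar (k :: s) (List.replicate s.length 1 ++ [a]) N =
      ∑ n ∈ Icc 1 N, hyperlogCoeff a (ratioWord (k :: s)) n := by
  induction s generalizing k N with
  | nil =>
    refine (truncLiStar_cons_cons k [] a [] N).trans (sum_congr rfl fun n _ => ?_)
    have hk := hyperlogCoeff_replicate_zero_append a (k - 1) [] n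
    rw [List.append_nil] at hk
    rw [truncLiStar_nil, mul_one, ratioWord, hk, hyperlogCoeff, div_div,
      mul_pow_sub_one (hs k List.mem_cons_self).ne']
  | cons j s ih =>
    rw [List.forall_mem_cons] at hs
    rw [List.length_cons, List.replicate_succ, List.cons_append, truncLiStar_cons_cons]
    refine sum_congr rfl fun n _ => ?_
    rw [ih hs.2, ratioWord, hyperlogCoeff_replicate_zero_append, hyperlogCoeff,
      geomAvg_eq_mul_sum one_ne_zero (hyperlogCoeff_apply_zero a _), ← mul_pow_sub_one hs.1.ne']
    simp only [div_one, one_pow, one_mul]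
    field_simp

lemma LiStar_replicate_one_append (ha : |a| ≤ 1) (hs : ∀ j ∈ s, 0 < j) :
    LiStar ((k + 2) :: s) (List.replicate s.length 1 ++ [a]) =
      ∑' n, hyperlogCoeff a (ratioWord ((k + 2) :: s)) n := by
  have hs' : ∀ j ∈ (k + 2) :: s, 0 < j := List.forall_mem_cons.2 ⟨Nat.succ_pos _, hs⟩
  have hsummable {b : ℝ} (hb : |b| ≤ 1) :
      Summable (hyperlogCoeff b (ratioWord ((k + 2) :: s))) := by
    rw [ratioWord_add_two_cons]
    exact summable_hyperlogCoeff_cons hb (by simp) fun r hr => abs_le_one_of_mem_ratioWord hr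
  refine LiStar_eq_tsum (hsummable ha) (hsummable (b := |a|) (by rwa [abs_abs]))
    (hyperlogCoeff_apply_zero _ _) (truncLiStar_replicate_one_append hs') fun N => ?_
  rw [List.map_append, List.map_replicate, abs_one, List.map_singleton,
    truncLiStar_replicate_one_append hs']

end ConstantArguments

section DepthReduction

lemma abs_moebiusRatio_le_one_of_mem_ratioWord {p r : ℝ} {s : List ℕ} (hp : |1 - p| ≤ 1)
    (hr : r ∈ ratioWord s) : |moebiusRatio p r| ≤ 1 := by
  rcases eq_zero_or_one_of_mem_ratioWord r hr with rfl | rfl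
  · simpa [moebiusRatio] using hp
  · simp [moebiusRatio]

lemma moebiusRatio_ne_zero_of_mem_ratioWord {p r : ℝ} {s : List ℕ} (hp : p ≠ 1)
    (hr : r ∈ ratioWord s) : moebiusRatio p r ≠ 0 := by
  rcases eq_zero_or_one_of_mem_ratioWord r hr with rfl | rfl <;>
    simp [moebiusRatio, sub_ne_zero, hp.symm]

theorem LiStar_depth_reduction {a p : ℝ} {k : ℕ} {s : List ℕ} (hs : ∀ j ∈ s, 0 < j) (hp₁ : p ≠ 1)
    (hp : |1 - p| < 1) (hb : |1 - 1 / p| ≤ 1) (ha : |a| ≤ 1) (ha' : |moebiusRatio p a| ≤ 1) :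
    LiStar (List.replicate ((k + 2) :: s).sum 1)
        (succQuotients 1
          ((ratioWord ((k + 2) :: s)).map (moebiusRatio p) ++ [moebiusRatio p a])) =
      LiStar ((k + 2) :: s) (List.replicate s.length 1 ++ [a]) -
        LiStar ((k + 2) :: s) (List.replicate s.length 1 ++ [1 - 1 / p]) := by
  have hp₀ : 0 < p := by linarith [abs_lt.1 hp]
  have hmap_ne : ∀ r ∈ (ratioWord ((k + 1) :: s)).map (moebiusRatio p), r ≠ 0 :=
    List.forall_mem_map.2 fun r hr => moebiusRatio_ne_zero_of_mem_ratioWord hp₁ hr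
  have hmap_le : ∀ r ∈ (ratioWord ((k + 1) :: s)).map (moebiusRatio p), |r| ≤ 1 :=
    List.forall_mem_map.2 fun r hr => abs_moebiusRatio_le_one_of_mem_ratioWord hp.le hr
  have hlt : |moebiusRatio p 0| < 1 := by rwa [moebiusRatio, mul_zero, add_zero]
  rw [LiStar_replicate_one_append ha hs, LiStar_replicate_one_append hb hs,
    ← length_ratioWord_cons_add_one (List.forall_mem_cons.2 ⟨Nat.succ_pos _, hs⟩),
    ratioWord_add_two_cons, ← tsum_hyperlogCoeff_moebius hp₀ ha ha' hb (by simp) hlt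
      (fun r hr => abs_le_one_of_mem_ratioWord hr) hmap_le, List.map_cons,
    ← LiStar_succQuotients ha' (by simpa [moebiusRatio, sub_ne_zero] using hp₁.symm) hlt hmap_ne
      hmap_le, List.length_cons, List.length_cons, List.length_map]

lemma sTup_zero (m : Fin 1 → ℕ) (u : Fin 0 → ℕ) : sTup 0 m u = [m 0 + 2] := rfl

lemma sTup_succ (d : ℕ) (m : Fin (d + 2) → ℕ) (u : Fin (d + 1) → ℕ) :
    sTup (d + 1) m u =
      (m 0 + 2) :: (List.replicate (u 0) 1 ++ sTup d (Fin.tail m) (Fin.tail u)) := by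
  rw [sTup, List.ofFn_succ, List.flatten_cons, List.append_assoc]
  rfl

lemma exists_sTup_eq_cons (d : ℕ) (m : Fin (d + 1) → ℕ) (u : Fin d → ℕ) :
    ∃ s, sTup d m u = (m 0 + 2) :: s := by
  cases d with
  | zero => exact ⟨[], rfl⟩
  | succ d => exact ⟨_, sTup_succ d m u⟩

lemma pos_of_mem_sTup {d : ℕ} {m : Fin (d + 1) → ℕ} {u : Fin d → ℕ} {k : ℕ}
    (hk : k ∈ sTup d m u) : 0 < k := by
  induction d with
  | zero => simp_all [sTup_zero]
  | succ d ih =>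
    rw [sTup_succ, List.mem_cons, List.mem_append] at hk
    rcases hk with rfl | hk | hk
    · exact Nat.succ_pos _
    · rw [List.eq_of_mem_replicate hk]
      exact one_pos
    · exact ih hk

lemma xPre_succ (d : ℕ) (m : Fin (d + 2) → ℕ) (u : Fin (d + 1) → ℕ) (p : ℝ) :
    xPre (d + 1) m u p =
      (1 - p) :: (List.replicate (m 0) 1 ++
        1 / (1 - p) :: (List.replicate (u 0) 1 ++ xPre d (Fin.tail m) (Fin.tail u) p)) := by
  rw [xPre, List.ofFn_succ, List.flatten_cons, List.cons_append, List.append_assoc,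
    List.cons_append]
  rfl

lemma succQuotients_ratioWord_sTup {p : ℝ} (hp₁ : p ≠ 1) (d : ℕ) (m : Fin (d + 1) → ℕ)
    (u : Fin d → ℕ) (e : ℝ) :
    succQuotients 1 ((ratioWord (sTup d m u)).map (moebiusRatio p) ++ [e]) =
      xPre d m u p ++
        (1 - p) :: (List.replicate (m (Fin.last d)) 1 ++ [e / (1 - p)]) := by
  have hp : 1 - p ≠ 0 := sub_ne_zero.2 hp₁.symm
  have h_zero : moebiusRatio p 0 = 1 - p := by simp [moebiusRatio]
  have h_one : moebiusRatio p 1 = 1 := by simp [moebiusRatio]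
  have h_sub (k : ℕ) : k + 2 - 1 = k + 1 := rfl
  induction d with
  | zero =>
    rw [sTup_zero, ratioWord, List.map_replicate, h_zero, h_sub,
      succQuotients_replicate_append hp, div_one]
    rfl
  | succ d ih =>
    obtain ⟨s, hs⟩ := exists_sTup_eq_cons d (Fin.tail m) (Fin.tail u)
    have hne : sTup d (Fin.tail m) (Fin.tail u) ≠ [] := by simp [hs]
    rw [sTup_succ, ratioWord_cons _ (List.append_ne_nil_of_right_ne_nil _ hne),
      ratioWord_replicate_one_append _ hne, ← List.cons_append, ← List.replicate_succ,
      List.map_append, List.map_append, List.map_replicate, List.map_replicate, h_zero, h_one,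
      List.append_assoc, List.append_assoc, h_sub,
      succQuotients_replicate_append hp, succQuotients_replicate_append one_ne_zero, ih, div_one,
      xPre_succ]
    simp only [List.cons_append, List.append_assoc]
    rfl

end DepthReduction

theorem stmt_16_general (d : ℕ) (m : Fin (d + 1) → ℕ) (u : Fin d → ℕ) {a p : ℝ}
    (hp : p ∈ Set.Ico (1 / 2 : ℝ) 2) (hp1 : p ≠ 1) (ha : a ∈ Set.Icc (max (-1) (1 - 2 / p)) 1) :
    LiStar (List.replicate (sTup d m u).sum 1)
        (xPre d m u p ++
          (1 - p) :: (List.replicate (m (Fin.last d)) (1 : ℝ) ++ [1 + a * p / (1 - p)])) =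
      LiStar (sTup d m u) (List.replicate ((sTup d m u).length - 1) (1 : ℝ) ++ [a]) -
        LiStar (sTup d m u)
          (List.replicate ((sTup d m u).length - 1) (1 : ℝ) ++ [1 - 1 / p]) := by
  obtain ⟨⟨hp_lower, hp_upper⟩, ha_lower, ha_upper⟩ := hp, ha
  rw [max_le_iff] at ha_lower
  have hp₀ : 0 < p := by linarith
  have hinv : 1 / p ≤ 2 := by rw [div_le_iff₀ hp₀]; linarith
  have hlast : 1 + a * p / (1 - p) = moebiusRatio p a / (1 - p) := by
    rw [moebiusRatio, add_div, div_self (sub_ne_zero.2 hp1.symm), mul_comm]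
  have ha' : |moebiusRatio p a| ≤ 1 := by
    have hpa : p - 2 ≤ p * a := by
      simpa [mul_sub, mul_div_cancel₀ _ hp₀.ne'] using mul_le_mul_of_nonneg_left ha_lower.2 hp₀.le
    rw [moebiusRatio, abs_le]
    constructor <;> nlinarith
  obtain ⟨s, hs⟩ := exists_sTup_eq_cons d m u
  rw [hlast, ← succQuotients_ratioWord_sTup hp1, hs]
  refine LiStar_depth_reduction (fun j hj => ?_) hp1 ?_ ?_ ?_ ha'
  · exact pos_of_mem_sTup (hs ▸ List.mem_cons_of_mem _ hj)
  · rw [abs_lt]; constructor <;> linarith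
  · rw [abs_le]; constructor <;> linarith [one_div_pos.2 hp₀]
  · exact abs_le.2 ⟨ha_lower.1, ha_upper⟩

/-- Depth-reduction formula (Corollary 3.2, second identity). -/
theorem stmt_16 (d : ℕ) (m : Fin (d + 1) → ℕ) (u : Fin d → ℕ) (a p : ℝ)
    (hA : a ∈ Set.Icc (-1 : ℝ) (1 / 3)) (hp : p ∈ Set.Icc (1 / 2 : ℝ) (3 / 2))
    (hp1 : p ≠ 1) (ha : |a| ≤ min 1 (2 / p - 1)) :
    LiStar (List.replicate (sTup d m u).sum 1)
        (xPre d m u p ++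
          (1 - p) :: (List.replicate (m (Fin.last d)) (1 : ℝ) ++ [1 + a * p / (1 - p)])) =
      LiStar (sTup d m u) (List.replicate ((sTup d m u).length - 1) (1 : ℝ) ++ [a]) -
        LiStar (sTup d m u)
          (List.replicate ((sTup d m u).length - 1) (1 : ℝ) ++ [1 - 1 / p]) := by
  obtain ⟨ha₁, ha_p⟩ := le_min_iff.1 ha
  exact stmt_16_general d m u ⟨hp.1, by linarith [hp.2]⟩ hp1
    ⟨max_le (abs_le.1 ha₁).1 (by linarith [neg_abs_le a]), (abs_le.1 ha₁).2⟩
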